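/- arXiv:math/9903198 — 6 statements merged into one kernel-verified Lean document; each statement's English description precedes it below -/
import Mathlib

section
/- For all smooth functions f, g : ℝ³ → ℝ one has [X_f, X_g] = X_{{f,g}}, where {f,g} is the Lagrange bracket. Consequently, the Lagrange bracket makes C^∞(ℝ³) into a Lie algebra and f ↦ X_f is a Lie algebra isomorphism from (C^∞(ℝ³), {·,·}) onto the Lie algebra of contact vector fields on ℝ³. -/
noncomputable section

/-- The 1-jet space `J¹(ℝ,ℝ) = ℝ³` with coordinates `(x, y, z)`. -/
abbrev R3 : Type := ℝ × ℝ × ℝ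

/-- The plane `ℝ²` with coordinates `(x, y)`. -/
abbrev R2 : Type := ℝ × ℝ

/-- Partial derivative in `x` of a function on `ℝ³`. -/
noncomputable def px (f : R3 → ℝ) (p : R3) : ℝ := fderiv ℝ f p (1, 0, 0)

/-- Partial derivative in `y` of a function on `ℝ³`. -/
noncomputable def py (f : R3 → ℝ) (p : R3) : ℝ := fderiv ℝ f p (0, 1, 0)

/-- Partial derivative in `z` of a function on `ℝ³`. -/
noncomputable def pz (f : R3 → ℝ) (p : R3) : ℝ := fderiv ℝ f p (0, 0, 1)

/-- The contact form `ω = dy − z dx` evaluated on a vector field `X`: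
`ω(X)(x,y,z) = X² − z·X¹`. -/
def omega1 (X : R3 → R3) (p : R3) : ℝ := (X p).2.1 - p.2.2 * (X p).1

/-- Lie bracket of vector fields on `ℝ³`: `[X,Y] = (DY)X − (DX)Y`. -/
noncomputable def vbr (X Y : R3 → R3) : R3 → R3 := fun p =>
  fderiv ℝ Y p (X p) - fderiv ℝ X p (Y p)

/-- The contact vector field with characteristic function `f`:
`X_f = (−f_z, f − z f_z, f_x + z f_y)`. -/
noncomputable def Xf (f : R3 → ℝ) : R3 → R3 := fun p =>
  (-(pz f p), f p - p.2.2 * pz f p, px f p + p.2.2 * py f p)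

/-- A vector field `X` on `ℝ³` is contact if it is smooth and `L_X ω = λ·ω` for some
smooth function `λ`; the Lie derivative of the 1-form `ω` is expressed through its
action on arbitrary smooth vector fields: `(L_X ω)(Y) = X(ω(Y)) − ω([X,Y])`. -/
def IsContactVF (X : R3 → R3) : Prop :=
  ContDiff ℝ (⊤ : ℕ∞) X ∧ ∃ lam : R3 → ℝ, ContDiff ℝ (⊤ : ℕ∞) lam ∧
    ∀ Y : R3 → R3, ContDiff ℝ (⊤ : ℕ∞) Y → ∀ p : R3,
      fderiv ℝ (fun q => omega1 Y q) p (X p) - omega1 (vbr X Y) p = lam p * omega1 Y p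

/-- The Lagrange bracket
`{f,g} = f_x g_z − f_z g_x + z(f_y g_z − f_z g_y) + f g_y − g f_y`. -/
noncomputable def lagr (f g : R3 → ℝ) (p : R3) : ℝ :=
  px f p * pz g p - pz f p * px g p
    + p.2.2 * (py f p * pz g p - pz f p * py g p)
    + f p * py g p - g p * py f p

theorem fd_decomp (f : R3 → ℝ) (p v : R3) :
    fderiv ℝ f p v = v.1 * px f p + v.2.1 * py f p + v.2.2 * pz f p := by
  have h : v = v.1 • ((1, 0, 0) : R3) + v.2.1 • ((0, 1, 0) : R3) + v.2.2 • ((0, 0, 1) : R3) := by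
    ext <;> simp
  conv_lhs => rw [h]
  simp only [map_add, map_smul, smul_eq_mul, px, py, pz]

theorem smooth_dir {f : R3 → ℝ} (hf : ContDiff ℝ (⊤ : ℕ∞) f) (v : R3) :
    ContDiff ℝ (⊤ : ℕ∞) (fun p => fderiv ℝ f p v) :=
  (hf.fderiv_right (m := (⊤ : ℕ∞)) (by simp)).clm_apply contDiff_const

theorem smooth_px {f : R3 → ℝ} (hf : ContDiff ℝ (⊤ : ℕ∞) f) : ContDiff ℝ (⊤ : ℕ∞) (px f) :=
  smooth_dir hf _
theorem smooth_py {f : R3 → ℝ} (hf : ContDiff ℝ (⊤ : ℕ∞) f) : ContDiff ℝ (⊤ : ℕ∞) (py f) :=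
  smooth_dir hf _
theorem smooth_pz {f : R3 → ℝ} (hf : ContDiff ℝ (⊤ : ℕ∞) f) : ContDiff ℝ (⊤ : ℕ∞) (pz f) :=
  smooth_dir hf _

theorem hasfd {E : Type*} [NormedAddCommGroup E] [NormedSpace ℝ E] {f : R3 → E}
    (hf : ContDiff ℝ (⊤ : ℕ∞) f) (p : R3) :
    HasFDerivAt f (fderiv ℝ f p) p :=
  (hf.differentiable (by simp) p).hasFDerivAt

theorem dir_comm {f : R3 → ℝ} (hf : ContDiff ℝ (⊤ : ℕ∞) f) (p v w : R3) :
    fderiv ℝ (fun q => fderiv ℝ f q v) p w = fderiv ℝ (fun q => fderiv ℝ f q w) p v := by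
  have hd : DifferentiableAt ℝ (fderiv ℝ f) p :=
    (hf.fderiv_right (m := (⊤ : ℕ∞)) (by simp)).differentiable (by simp) p
  have e : ∀ u : R3, fderiv ℝ (fun q => fderiv ℝ f q u) p = (fderiv ℝ (fderiv ℝ f) p).flip u := by
    intro u
    apply ContinuousLinearMap.ext
    intro t
    rw [fderiv_clm_apply hd (differentiableAt_const u)]
    simp
  rw [e, e]
  have hs : IsSymmSndFDerivAt ℝ f p :=
    (hf.contDiffAt).isSymmSndFDerivAt (by
      rw [minSmoothness_of_isRCLikeNormedField]
      exact WithTop.coe_le_coe.2 (le_top : (2 : ℕ∞) ≤ ⊤))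
  exact hs w v

theorem pyx {f : R3 → ℝ} (hf : ContDiff ℝ (⊤ : ℕ∞) f) (p : R3) :
    py (px f) p = px (py f) p := dir_comm hf p _ _
theorem pzx {f : R3 → ℝ} (hf : ContDiff ℝ (⊤ : ℕ∞) f) (p : R3) :
    pz (px f) p = px (pz f) p := dir_comm hf p _ _
theorem pzy {f : R3 → ℝ} (hf : ContDiff ℝ (⊤ : ℕ∞) f) (p : R3) :
    pz (py f) p = py (pz f) p := dir_comm hf p _ _

def zL : R3 →L[ℝ] ℝ := (ContinuousLinearMap.snd ℝ ℝ ℝ).comp (ContinuousLinearMap.snd ℝ ℝ (ℝ × ℝ))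

theorem zL_apply (v : R3) : zL v = v.2.2 := rfl

theorem hasz (p : R3) : HasFDerivAt (fun q : R3 => q.2.2) zL p := zL.hasFDerivAt

theorem smooth_z : ContDiff ℝ (⊤ : ℕ∞) (fun q : R3 => q.2.2) := zL.contDiff

theorem smooth_lagr {f g : R3 → ℝ} (hf : ContDiff ℝ (⊤ : ℕ∞) f) (hg : ContDiff ℝ (⊤ : ℕ∞) g) :
    ContDiff ℝ (⊤ : ℕ∞) (lagr f g) := by
  have := smooth_px hf
  have := smooth_py hf
  have := smooth_pz hf
  have := smooth_px hg
  have := smooth_py hg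
  have := smooth_pz hg
  have := smooth_z
  unfold lagr
  fun_prop

theorem smooth_Xf {f : R3 → ℝ} (hf : ContDiff ℝ (⊤ : ℕ∞) f) :
    ContDiff ℝ (⊤ : ℕ∞) (Xf f) := by
  have := smooth_px hf
  have := smooth_py hf
  have := smooth_pz hf
  have := smooth_z
  unfold Xf
  fun_prop

theorem fd_lagr {f g : R3 → ℝ} (hf : ContDiff ℝ (⊤ : ℕ∞) f) (hg : ContDiff ℝ (⊤ : ℕ∞) g)
    (p v : R3) : fderiv ℝ (lagr f g) p v =
      fderiv ℝ (px f) p v * pz g p + px f p * fderiv ℝ (pz g) p v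
      - (fderiv ℝ (pz f) p v * px g p + pz f p * fderiv ℝ (px g) p v)
      + v.2.2 * (py f p * pz g p - pz f p * py g p)
      + p.2.2 * (fderiv ℝ (py f) p v * pz g p + py f p * fderiv ℝ (pz g) p v
        - (fderiv ℝ (pz f) p v * py g p + pz f p * fderiv ℝ (py g) p v))
      + (fderiv ℝ f p v * py g p + f p * fderiv ℝ (py g) p v)
      - (fderiv ℝ g p v * py f p + g p * fderiv ℝ (py f) p v) := by
  have f0 := hasfd hf p
  have f1 := hasfd (smooth_px hf) p
  have f2 := hasfd (smooth_py hf) p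
  have f3 := hasfd (smooth_pz hf) p
  have g0 := hasfd hg p
  have g1 := hasfd (smooth_px hg) p
  have g2 := hasfd (smooth_py hg) p
  have g3 := hasfd (smooth_pz hg) p
  have H := (((f1.mul g3).sub (f3.mul g1)).add
    ((hasz p).mul ((f2.mul g3).sub (f3.mul g2)))).add (f0.mul g2) |>.sub (g0.mul f2)
  have H' : HasFDerivAt (lagr f g) _ p := H
  rw [H'.fderiv]
  simp [zL_apply]
  ring

theorem fd_Xf {f : R3 → ℝ} (hf : ContDiff ℝ (⊤ : ℕ∞) f) (p v : R3) :
    fderiv ℝ (Xf f) p v =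
      (-(fderiv ℝ (pz f) p v),
       fderiv ℝ f p v - (v.2.2 * pz f p + p.2.2 * fderiv ℝ (pz f) p v),
       fderiv ℝ (px f) p v + (v.2.2 * py f p + p.2.2 * fderiv ℝ (py f) p v)) := by
  have f0 := hasfd hf p
  have f1 := hasfd (smooth_px hf) p
  have f2 := hasfd (smooth_py hf) p
  have f3 := hasfd (smooth_pz hf) p
  have H := f3.neg.prodMk ((f0.sub ((hasz p).mul f3)).prodMk (f1.add ((hasz p).mul f2)))
  have H' : HasFDerivAt (Xf f) _ p := H
  rw [H'.fderiv]
  ext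
  · simp
  · simp [zL_apply]; ring
  · simp [zL_apply]; ring

theorem fd_omega {Y : R3 → R3} (hY : ContDiff ℝ (⊤ : ℕ∞) Y) (p v : R3) :
    fderiv ℝ (omega1 Y) p v = (fderiv ℝ Y p v).2.1
      - (v.2.2 * (Y p).1 + p.2.2 * (fderiv ℝ Y p v).1) := by
  have y0 := hasfd hY p
  have H := y0.snd.fst.sub ((hasz p).mul y0.fst)
  have H' : HasFDerivAt (omega1 Y) _ p := H
  rw [H'.fderiv]
  simp [zL_apply]
  ring

theorem smooth_omega {Y : R3 → R3} (hY : ContDiff ℝ (⊤ : ℕ∞) Y) :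
    ContDiff ℝ (⊤ : ℕ∞) (omega1 Y) := by
  have := smooth_z
  unfold omega1
  fun_prop

theorem omega_Xf (f : R3 → ℝ) (p : R3) : omega1 (Xf f) p = f p := by
  simp only [omega1, Xf]; ring

theorem px_eq (f : R3 → ℝ) (p : R3) : fderiv ℝ f p (1, 0, 0) = px f p := rfl
theorem py_eq (f : R3 → ℝ) (p : R3) : fderiv ℝ f p (0, 1, 0) = py f p := rfl
theorem pz_eq (f : R3 → ℝ) (p : R3) : fderiv ℝ f p (0, 0, 1) = pz f p := rfl

theorem px_lagr {f g : R3 → ℝ} (hf : ContDiff ℝ (⊤ : ℕ∞) f) (hg : ContDiff ℝ (⊤ : ℕ∞) g)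
    (p : R3) : px (lagr f g) p =
      px (px f) p * pz g p + px f p * px (pz g) p
      - (px (pz f) p * px g p + pz f p * px (px g) p)
      + 0 * (py f p * pz g p - pz f p * py g p)
      + p.2.2 * (px (py f) p * pz g p + py f p * px (pz g) p
        - (px (pz f) p * py g p + pz f p * px (py g) p))
      + (px f p * py g p + f p * px (py g) p)
      - (px g p * py f p + g p * px (py f) p) := fd_lagr hf hg p (1, 0, 0)
theorem py_lagr {f g : R3 → ℝ} (hf : ContDiff ℝ (⊤ : ℕ∞) f) (hg : ContDiff ℝ (⊤ : ℕ∞) g)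
    (p : R3) : py (lagr f g) p =
      py (px f) p * pz g p + px f p * py (pz g) p
      - (py (pz f) p * px g p + pz f p * py (px g) p)
      + 0 * (py f p * pz g p - pz f p * py g p)
      + p.2.2 * (py (py f) p * pz g p + py f p * py (pz g) p
        - (py (pz f) p * py g p + pz f p * py (py g) p))
      + (py f p * py g p + f p * py (py g) p)
      - (py g p * py f p + g p * py (py f) p) := fd_lagr hf hg p (0, 1, 0)
theorem pz_lagr {f g : R3 → ℝ} (hf : ContDiff ℝ (⊤ : ℕ∞) f) (hg : ContDiff ℝ (⊤ : ℕ∞) g)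
    (p : R3) : pz (lagr f g) p =
      pz (px f) p * pz g p + px f p * pz (pz g) p
      - (pz (pz f) p * px g p + pz f p * pz (px g) p)
      + 1 * (py f p * pz g p - pz f p * py g p)
      + p.2.2 * (pz (py f) p * pz g p + py f p * pz (pz g) p
        - (pz (pz f) p * py g p + pz f p * pz (py g) p))
      + (pz f p * py g p + f p * pz (py g) p)
      - (pz g p * py f p + g p * pz (py f) p) := fd_lagr hf hg p (0, 0, 1)

theorem lagr_def (f g : R3 → ℝ) (p : R3) : lagr f g p =
  px f p * pz g p - pz f p * px g p
    + p.2.2 * (py f p * pz g p - pz f p * py g p)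
    + f p * py g p - g p * py f p := rfl

/-- `[X_f, X_g] = X_{{f,g}}` for all smooth `f, g`; consequently the
Lagrange bracket makes `C^∞(ℝ³)` into a Lie algebra (it is bilinear, antisymmetric and
satisfies the Jacobi identity) and `f ↦ X_f` is a Lie algebra isomorphism onto the Lie
algebra of contact vector fields on `ℝ³`. -/
theorem stmt2 :
    (∀ f g : R3 → ℝ, ContDiff ℝ (⊤ : ℕ∞) f → ContDiff ℝ (⊤ : ℕ∞) g →
      ∀ p : R3, vbr (Xf f) (Xf g) p = Xf (lagr f g) p) ∧
    (∀ f g : R3 → ℝ, ∀ p : R3, lagr f g p = -lagr g f p) ∧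
    (∀ f g h : R3 → ℝ, ContDiff ℝ (⊤ : ℕ∞) f → ContDiff ℝ (⊤ : ℕ∞) g →
      ContDiff ℝ (⊤ : ℕ∞) h → ∀ p : R3,
        lagr f (lagr g h) p + lagr g (lagr h f) p + lagr h (lagr f g) p = 0) ∧
    (∀ f g h : R3 → ℝ, ContDiff ℝ (⊤ : ℕ∞) f → ContDiff ℝ (⊤ : ℕ∞) g →
      ContDiff ℝ (⊤ : ℕ∞) h → ∀ a b : ℝ, ∀ p : R3,
        lagr (fun q => a * f q + b * g q) h p = a * lagr f h p + b * lagr g h p) ∧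
    (∀ f : R3 → ℝ, ContDiff ℝ (⊤ : ℕ∞) f → IsContactVF (Xf f)) ∧
    (∀ f g : R3 → ℝ, ContDiff ℝ (⊤ : ℕ∞) f → ContDiff ℝ (⊤ : ℕ∞) g →
      (∀ p : R3, Xf f p = Xf g p) → f = g) ∧
    (∀ X : R3 → R3, IsContactVF X →
      ∃ f : R3 → ℝ, ContDiff ℝ (⊤ : ℕ∞) f ∧ ∀ p : R3, Xf f p = X p) := by
  refine ⟨?_, ?_, ?_, ?_, ?_, ?_, ?_⟩
  · intro f g hf hg p
    simp only [vbr, fd_Xf hf, fd_Xf hg]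
    simp only [fd_decomp _ p (Xf _ p)]
    simp only [Xf, px_lagr hf hg, py_lagr hf hg, pz_lagr hf hg,
      pyx hf, pzx hf, pzy hf, pyx hg, pzx hg, pzy hg, lagr_def f g p]
    ext
    · simp only [Prod.fst_sub]; ring
    · simp only [Prod.fst_sub, Prod.snd_sub]; ring
    · simp only [Prod.snd_sub]; ring
  · intro f g p
    simp only [lagr]; ring
  · intro f g h hf hg hh p
    rw [lagr_def f (lagr g h), lagr_def g (lagr h f), lagr_def h (lagr f g)]
    simp only [px_lagr hf hg, py_lagr hf hg, pz_lagr hf hg, px_lagr hg hh, py_lagr hg hh,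
      pz_lagr hg hh, px_lagr hh hf, py_lagr hh hf, pz_lagr hh hf,
      pyx hf, pzx hf, pzy hf, pyx hg, pzx hg, pzy hg, pyx hh, pzx hh, pzy hh,
      lagr_def f g p, lagr_def g h p, lagr_def h f p]
    ring
  · intro f g h hf hg hh a b p
    have H : fderiv ℝ (fun q => a * f q + b * g q) p = a • fderiv ℝ f p + b • fderiv ℝ g p :=
      (((hasfd hf p).const_mul a).add ((hasfd hg p).const_mul b)).fderiv
    have e : ∀ v, fderiv ℝ (fun q => a * f q + b * g q) p v
        = a * fderiv ℝ f p v + b * fderiv ℝ g p v := by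
      intro v; rw [H]; simp
    simp only [lagr, px, py, pz, e]
    ring
  · intro f hf
    refine ⟨smooth_Xf hf, py f, smooth_py hf, ?_⟩
    intro Y hY p
    have h1 := fd_omega hY p (Xf f p)
    change fderiv ℝ (omega1 Y) p (Xf f p) - _ = _
    rw [h1]
    simp only [omega1, vbr, Prod.fst_sub, Prod.snd_sub, fd_Xf hf, fd_decomp _ p (Y p)]
    simp only [Xf]
    ring
  · intro f g _ _ h
    funext p
    rw [← omega_Xf f p, ← omega_Xf g p]
    simp only [omega1, h p]
  · rintro X ⟨hX, lam, -, h⟩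
    refine ⟨omega1 X, smooth_omega hX, fun p => ?_⟩
    have key : ∀ e : R3, - ((X p).2.2 * e.1) + ((fderiv ℝ X p e).2.1
        - p.2.2 * (fderiv ℝ X p e).1) = lam p * (e.2.1 - p.2.2 * e.1) := by
      intro e
      have h1 := h (fun _ => e) contDiff_const p
      change fderiv ℝ (omega1 fun _ => e) p (X p) - _ = _ at h1
      rw [fd_omega contDiff_const] at h1
      simp [omega1, vbr] at h1
      linarith
    have k1 := key (1, 0, 0)
    have k2 := key (0, 1, 0)
    have k3 := key (0, 0, 1)
    simp only [Xf, px, py, pz, fd_omega hX]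
    simp only [omega1] at *
    ext
    · simp only; linarith
    · simp only; linear_combination (- p.2.2) * k3
    · simp only; linear_combination k1 + p.2.2 * k2
end
end

section
/- A contact vector field X_f on ℝ³ is π-related to some smooth vector field on ℝ² (i.e., is a point vector field) if and only if ∂²f/∂z² = 0 identically, i.e., if and only if f(x,y,z) = B(x,y) − A(x,y)·z for some smooth functions A, B on ℝ². -/
noncomputable section

/-- Partial derivative in `x` of a function on the plane. -/
noncomputable def qx (A : R2 → ℝ) (q : R2) : ℝ := fderiv ℝ A q (1, 0)

/-- Partial derivative in `y` of a function on the plane. -/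
noncomputable def qy (A : R2 → ℝ) (q : R2) : ℝ := fderiv ℝ A q (0, 1)

/-- The projection `π : ℝ³ → ℝ²`, `(x,y,z) ↦ (x,y)`. -/
def proj (p : R3) : R2 := (p.1, p.2.1)

/-- The first prolongation of the plane vector field `(A, B)`:
`X^{(1)} = (A, B, B_y z² + (B_x − A_y) z − A_x)`. -/
noncomputable def prolong (A B : R2 → ℝ) : R3 → R3 := fun p =>
  (A (proj p), B (proj p),
    qy B (proj p) * p.2.2 ^ 2 + (qx B (proj p) - qy A (proj p)) * p.2.2 - qx A (proj p))

/-- A vector field `X` on `ℝ³` is `π`-related to the plane vector field `(A, B)` if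
`(X¹, X²)(x,y,z) = (A(x,y), B(x,y))` for all `(x,y,z)`. -/
def piRel (Xv : R3 → R3) (A B : R2 → ℝ) : Prop :=
  ∀ p : R3, (Xv p).1 = A (proj p) ∧ (Xv p).2.1 = B (proj p)

theorem hasDerivAt_pz (g : R3 → ℝ) (hg : Differentiable ℝ g) (x y z : ℝ) :
    HasDerivAt (fun t : ℝ => g (x, y, t)) (pz g (x, y, z)) z := by
  have h1 : HasDerivAt (fun t : ℝ => ((x, y, t) : R3)) (0, 0, 1) z :=
    (hasDerivAt_const z x).prodMk ((hasDerivAt_const z y).prodMk (hasDerivAt_id z))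
  exact (hg (x, y, z)).hasFDerivAt.comp_hasDerivAt z h1

theorem contDiff_pz (f : R3 → ℝ) (hf : ContDiff ℝ (⊤ : ℕ∞) f) :
    ContDiff ℝ (⊤ : ℕ∞) (pz f) := by
  have h : ContDiff ℝ (⊤ : ℕ∞) (fderiv ℝ f) := hf.fderiv_right (by simp)
  exact h.clm_apply contDiff_const

theorem pz_affine (f : R3 → ℝ) (hf : Differentiable ℝ f) (A B : R2 → ℝ)
    (h : ∀ p : R3, f p = B (proj p) - A (proj p) * p.2.2) (p : R3) :
    pz f p = -A (proj p) := by
  obtain ⟨x, y, z⟩ := p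
  refine (hasDerivAt_pz f hf x y z).unique ?_
  have h2 : (fun t : ℝ => f (x, y, t)) = fun t => B (x, y) - A (x, y) * t := by
    funext t
    exact h (x, y, t)
  rw [h2]
  simpa [proj] using ((hasDerivAt_id z).const_mul (A (x, y))).const_sub (B (x, y))

theorem affine_of_pz (f : R3 → ℝ) (hf : Differentiable ℝ f) (A : R2 → ℝ)
    (h : ∀ p : R3, pz f p = -A (proj p)) (x y z : ℝ) :
    f (x, y, z) = f (x, y, 0) - A (x, y) * z := by
  have hd : ∀ t : ℝ, HasDerivAt (fun t : ℝ => f (x, y, t) + A (x, y) * t) 0 t := by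
    intro t
    have h1 := (hasDerivAt_pz f hf x y t).add ((hasDerivAt_id t).const_mul (A (x, y)))
    rw [h] at h1
    simp only [proj, mul_one, neg_add_cancel] at h1
    exact h1
  have h3 := is_const_of_deriv_eq_zero (fun t => (hd t).differentiableAt)
    (fun t => (hd t).deriv) z 0
  simp only [mul_zero, add_zero] at h3
  linarith

/-- A contact vector field `X_f` on `ℝ³` is `π`-related to some smooth
plane vector field (i.e. is a point vector field) iff `∂²f/∂z² = 0` identically, iff
`f(x,y,z) = B(x,y) − A(x,y)·z` for some smooth `A, B`. -/
theorem stmt5 (f : R3 → ℝ) (hf : ContDiff ℝ (⊤ : ℕ∞) f) :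
    ((∃ A B : R2 → ℝ, ContDiff ℝ (⊤ : ℕ∞) A ∧ ContDiff ℝ (⊤ : ℕ∞) B ∧
        piRel (Xf f) A B) ↔
      (∀ p : R3, pz (pz f) p = 0)) ∧
    ((∃ A B : R2 → ℝ, ContDiff ℝ (⊤ : ℕ∞) A ∧ ContDiff ℝ (⊤ : ℕ∞) B ∧
        piRel (Xf f) A B) ↔
      (∃ A B : R2 → ℝ, ContDiff ℝ (⊤ : ℕ∞) A ∧ ContDiff ℝ (⊤ : ℕ∞) B ∧
        ∀ p : R3, f p = B (proj p) - A (proj p) * p.2.2)) := by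
  have hfd : Differentiable ℝ f := hf.differentiable (by simp)
  have hzs := contDiff_pz f hf
  have hzd : Differentiable ℝ (pz f) := hzs.differentiable (by simp)
  have h13 : (∃ A B : R2 → ℝ, ContDiff ℝ (⊤ : ℕ∞) A ∧ ContDiff ℝ (⊤ : ℕ∞) B ∧
        piRel (Xf f) A B) →
      (∃ A B : R2 → ℝ, ContDiff ℝ (⊤ : ℕ∞) A ∧ ContDiff ℝ (⊤ : ℕ∞) B ∧
        ∀ p : R3, f p = B (proj p) - A (proj p) * p.2.2) := by
    rintro ⟨A, B, hA, hB, h⟩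
    refine ⟨A, B, hA, hB, fun p => ?_⟩
    obtain ⟨h1, h2⟩ := h p
    simp only [Xf] at h1 h2
    rw [← h1, ← h2]
    ring
  have h31 : (∃ A B : R2 → ℝ, ContDiff ℝ (⊤ : ℕ∞) A ∧ ContDiff ℝ (⊤ : ℕ∞) B ∧
        ∀ p : R3, f p = B (proj p) - A (proj p) * p.2.2) →
      (∃ A B : R2 → ℝ, ContDiff ℝ (⊤ : ℕ∞) A ∧ ContDiff ℝ (⊤ : ℕ∞) B ∧
        piRel (Xf f) A B) := by
    rintro ⟨A, B, hA, hB, h⟩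
    refine ⟨A, B, hA, hB, fun p => ?_⟩
    have hz := pz_affine f hfd A B h p
    simp only [Xf]
    rw [hz, h p]
    constructor <;> ring
  refine ⟨⟨fun h1 p => ?_, fun h2 => h31 ?_⟩, h13, h31⟩
  · obtain ⟨A, B, hA, hB, h⟩ := h13 h1
    have hz := pz_affine f hfd A B h
    have := pz_affine (pz f) hzd (fun _ => 0) (fun q => -A q) (fun p => by simp [hz p]) p
    simpa using this
  · have hi : ContDiff ℝ (⊤ : ℕ∞) (fun q : R2 => ((q.1, q.2, 0) : R3)) := by fun_prop
    have hc : ∀ p : R3, pz f p = -(fun q : R2 => -pz f (q.1, q.2, 0)) (proj p) := by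
      rintro ⟨x, y, z⟩
      have := affine_of_pz (pz f) hzd (fun _ => 0) (fun p => by simp [h2 p]) x y z
      simpa [proj] using this
    refine ⟨fun q => -pz f (q.1, q.2, 0), fun q => f (q.1, q.2, 0),
      (hzs.comp hi).neg, hf.comp hi, ?_⟩
    rintro ⟨x, y, z⟩
    exact affine_of_pz f hfd (fun q : R2 => -pz f (q.1, q.2, 0)) hc x y z
end
end

section
/- Let U ⊆ ℝ³ be open and let e be a nowhere-vanishing smooth vector field on U with values in the contact distribution C (i.e., ω(e) = 0), spanning a one-dimensional subdistribution E ⊆ C. Let A, B : U → ℝ be smooth first integrals of E (dA(e) = 0 and dB(e) = 0) with dA ∧ dB nowhere zero, and suppose A_x + z·A_y ≠ 0 on U. Then the map φ(x,y,z) = (A, B, (B_x + z B_y)/(A_x + z A_y)) is a contact map (its differential maps C into C), and its differential maps E into the vertical distribution V = span{∂/∂z}. -/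
noncomputable section

/-- The contact form `ω = dy − z dx` at `p` on the vector `v`: `ω_p(v) = v² − z·v¹`. -/
def omv (p v : R3) : ℝ := v.2.1 - p.2.2 * v.1

/-- The map `φ(x,y,z) = (A, B, (B_x + z B_y)/(A_x + z A_y))` built from two first
integrals `A, B` of a one-dimensional subdistribution of the contact distribution. -/
noncomputable def rectifyMap (A B : R3 → ℝ) : R3 → R3 := fun p =>
  (A p, B p, (px B p + p.2.2 * py B p) / (px A p + p.2.2 * py A p))

/-- Let `e` be a nowhere-vanishing smooth vector field on an open
`U ⊆ ℝ³` with values in the contact distribution, spanning a subdistribution `E ⊆ C`,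
and let `A, B` be smooth first integrals of `E` with `dA ∧ dB ≠ 0` and `A_x + z A_y ≠ 0`
on `U`.  Then `φ = (A, B, (B_x + z B_y)/(A_x + z A_y))` is a contact map (its
differential maps `C` into `C`) whose differential maps `E` into the vertical
distribution `V = span{∂/∂z}`. -/
theorem stmt7 (U : Set R3) (hU : IsOpen U) (e : R3 → R3)
    (he : ContDiffOn ℝ (⊤ : ℕ∞) e U)
    (hne : ∀ p ∈ U, e p ≠ 0)
    (heC : ∀ p ∈ U, omv p (e p) = 0)
    (A B : R3 → ℝ)
    (hA : ContDiffOn ℝ (⊤ : ℕ∞) A U) (hB : ContDiffOn ℝ (⊤ : ℕ∞) B U)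
    (hAe : ∀ p ∈ U, fderiv ℝ A p (e p) = 0)
    (hBe : ∀ p ∈ U, fderiv ℝ B p (e p) = 0)
    (hind : ∀ p ∈ U, ∃ v w : R3,
      fderiv ℝ A p v * fderiv ℝ B p w - fderiv ℝ A p w * fderiv ℝ B p v ≠ 0)
    (hden : ∀ p ∈ U, px A p + p.2.2 * py A p ≠ 0) :
    (∀ p ∈ U, ∀ v : R3, omv p v = 0 →
      omv (rectifyMap A B p) (fderiv ℝ (rectifyMap A B) p v) = 0) ∧
    (∀ p ∈ U, (fderiv ℝ (rectifyMap A B) p (e p)).1 = 0 ∧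
      (fderiv ℝ (rectifyMap A B) p (e p)).2.1 = 0) := by
  -- components of the differential of `φ`
  have key : ∀ p ∈ U, ∀ v : R3, fderiv ℝ (rectifyMap A B) p = 0 ∨
      ((fderiv ℝ (rectifyMap A B) p v).1 = fderiv ℝ A p v ∧
       (fderiv ℝ (rectifyMap A B) p v).2.1 = fderiv ℝ B p v) := by
    intro p _ v
    by_cases hd : DifferentiableAt ℝ (rectifyMap A B) p
    · right
      have h := hd.hasFDerivAt
      have h1 : HasFDerivAt A _ p := h.fst
      have h2 : HasFDerivAt B _ p := h.snd.fst
      rw [h1.fderiv, h2.fderiv]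
      exact ⟨rfl, rfl⟩
    · left
      exact fderiv_zero_of_not_differentiableAt hd
  -- the differential of a function on a contact vector
  have lin : ∀ (L : R3 →L[ℝ] ℝ) (p v : R3), omv p v = 0 →
      L v = v.1 * (L (1, 0, 0) + p.2.2 * L (0, 1, 0)) + v.2.2 * L (0, 0, 1) := by
    intro L p v hv
    have hv' : v.2.1 = p.2.2 * v.1 := by
      unfold omv at hv
      linarith
    have hdec : v = v.1 • ((1, 0, 0) : R3) + (p.2.2 * v.1) • ((0, 1, 0) : R3)
        + v.2.2 • ((0, 0, 1) : R3) := by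
      ext <;> simp [hv']
    have h := congrArg L hdec
    rw [map_add, map_add, map_smul, map_smul, map_smul] at h
    simp only [smul_eq_mul] at h
    rw [h]
    ring
  refine ⟨?_, ?_⟩
  · intro p hp v hv
    rcases key p hp v with h0 | ⟨h1, h2⟩
    · simp [h0, omv]
    · have hX := hden p hp
      have ea := hAe p hp
      have eb := hBe p hp
      have hec := heC p hp
      rw [lin _ p _ hec] at ea eb
      have hc : (e p).2.2 ≠ 0 := by
        intro hc
        rw [hc, zero_mul, add_zero] at ea
        have h1 : (e p).1 = 0 := (mul_eq_zero.mp ea).resolve_right hX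
        have h3 : (e p).2.1 = 0 := by
          simpa [omv, h1] using hec
        exact hne p hp (Prod.ext h1 (Prod.ext h3 hc))
      unfold omv
      rw [h1, h2, lin _ p v hv, lin (fderiv ℝ A p) p v hv]
      simp only [rectifyMap, px, py] at hX ⊢
      generalize fderiv ℝ A p (1, 0, 0) + p.2.2 * fderiv ℝ A p (0, 1, 0) = XA at *
      generalize fderiv ℝ B p (1, 0, 0) + p.2.2 * fderiv ℝ B p (0, 1, 0) = XB at *
      generalize fderiv ℝ A p (0, 0, 1) = Az at *
      generalize fderiv ℝ B p (0, 0, 1) = Bz at *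
      have hW : Bz * XA - XB * Az = 0 := by
        apply (mul_eq_zero.mp (?_ : (e p).2.2 * (Bz * XA - XB * Az) = 0)).resolve_left hc
        linear_combination XA * eb - XB * ea
      field_simp
      linear_combination v.2.2 * hW
  · intro p hp
    rcases key p hp (e p) with h0 | ⟨h1, h2⟩
    · simp [h0]
    · exact ⟨h1.trans (hAe p hp), h2.trans (hBe p hp)⟩
end
end

section
/- Let g be a finite-dimensional real Lie algebra with a decreasing filtration (g_p)_{p∈ℤ} by subspaces such that g_p = g for all sufficiently negative p, [g_p, g_q] ⊆ g_{p+q} for all p, q, and ⋂_p g_p = 0. Suppose there exists ē ∈ g₀ such that for every p ∈ ℤ and every x ∈ g_p one has [ē, x] − p·x ∈ g_{p+1} (i.e., ad ē acts as multiplication by p on g_p/g_{p+1}). Then, setting g^p(ē) = {x ∈ g : [ē, x] = p·x}, one has g_p = g^p(ē) ⊕ g_{p+1} for every p ∈ ℤ; consequently g = ⊕_p g^p(ē), [g^i(ē), g^j(ē)] ⊆ g^{i+j}(ē), and g_p = ⊕_{q ≥ p} g^q(ē), so that g is isomorphic as a filtered Lie algebra to its associated graded Lie algebra. -/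
section

variable {g : Type*} [LieRing g] [LieAlgebra ℝ g]

/-- The eigenspace `g^p(e) = {x ∈ g : [e, x] = p·x}` of `ad e`. -/
def eig (e : g) (p : ℤ) : Submodule ℝ g where
  carrier := {x | ⁅e, x⁆ = (p : ℝ) • x}
  add_mem' := fun {a b} ha hb => by
    simp only [Set.mem_setOf_eq] at *
    rw [lie_add, ha, hb, smul_add]
  zero_mem' := by simp
  smul_mem' := fun c x hx => by
    simp only [Set.mem_setOf_eq] at *
    rw [lie_smul, hx, smul_comm]

/-- Let `g` be a finite-dimensional real Lie algebra with a decreasing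
filtration `(g_p)` such that `g_p = g` for `p` sufficiently negative,
`[g_p, g_q] ⊆ g_{p+q}` and `⋂ g_p = 0`, and suppose `ē ∈ g₀` acts as multiplication by
`p` on each `g_p / g_{p+1}`.  Then with `g^p(ē) = {x : [ē,x] = p·x}` one has
`g_p = g^p(ē) ⊕ g_{p+1}` for all `p`; consequently `g = ⊕_p g^p(ē)`,
`[g^i(ē), g^j(ē)] ⊆ g^{i+j}(ē)` and `g_p = ⊕_{q ≥ p} g^q(ē)`, so `g` is isomorphic as a
filtered Lie algebra to its associated graded Lie algebra. -/
theorem stmt9 [FiniteDimensional ℝ g] (F : ℤ → Submodule ℝ g)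
    (hdec : ∀ p : ℤ, F (p + 1) ≤ F p)
    (hneg : ∃ N : ℤ, ∀ p ≤ N, F p = ⊤)
    (hbr : ∀ p q : ℤ, ∀ x ∈ F p, ∀ y ∈ F q, ⁅x, y⁆ ∈ F (p + q))
    (hint : (⨅ p : ℤ, F p) = ⊥)
    (e : g) (he : e ∈ F 0)
    (hgr : ∀ p : ℤ, ∀ x ∈ F p, ⁅e, x⁆ - (p : ℝ) • x ∈ F (p + 1)) :
    (∀ p : ℤ, F p = eig e p ⊔ F (p + 1)) ∧
    (∀ p : ℤ, eig e p ⊓ F (p + 1) = ⊥) ∧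
    ((⨆ p : ℤ, eig e p) = ⊤) ∧
    (∀ i j : ℤ, ∀ x ∈ eig e i, ∀ y ∈ eig e j, ⁅x, y⁆ ∈ eig e (i + j)) ∧
    (∀ p : ℤ, F p = ⨆ q : ℤ, ⨆ _ : p ≤ q, eig e q) := by
  have hanti : Antitone F := antitone_int_of_succ_le hdec
  have step : ∀ p q : ℤ, p ≠ q → ∀ x ∈ eig e p, x ∈ F q → x ∈ F (q + 1) := by
    intro p q hpq x hx hxq
    have h := hgr q x hxq
    have hx' : ⁅e, x⁆ = (p : ℝ) • x := hx
    rw [hx', ← sub_smul] at h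
    have hne : (p : ℝ) - q ≠ 0 := sub_ne_zero.mpr (by exact_mod_cast hpq)
    exact ((F (q + 1)).smul_mem_iff hne).mp h
  obtain ⟨N, hN⟩ := hneg
  have eigF : ∀ p : ℤ, eig e p ≤ F p := by
    intro p x hx
    have key : ∀ n : ℕ, N + n ≤ p → x ∈ F (N + n) := by
      intro n
      induction n with
      | zero => intro _; simp [hN N le_rfl]
      | succ k ih =>
        intro h
        push_cast at h ⊢
        rw [← add_assoc]
        exact step p (N + k) (by omega) x hx (ih (by omega))
    by_cases h : p ≤ N
    · simp [hN p h]
    · have := key (p - N).toNat (by omega)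
      have h2 : N + ((p - N).toNat : ℤ) = p := by omega
      rwa [h2] at this
  have hM : ∃ M : ℤ, ∀ p, M ≤ p → F p = ⊥ := by
    obtain ⟨n, hn⟩ := IsArtinian.monotone_stabilizes (R := ℝ) (M := g)
      ⟨fun n : ℕ => OrderDual.toDual (F n), fun a b hab => hanti (by exact_mod_cast hab)⟩
    have hn' : ∀ m : ℕ, n ≤ m → F n = F m := fun m hm => hn m hm
    have hbot : F n = ⊥ := by
      rw [eq_bot_iff, ← hint]
      refine le_iInf fun q => ?_
      rw [hn' (max n q.toNat) (le_max_left _ _)]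
      exact hanti (by omega)
    exact ⟨n, fun p hp => eq_bot_iff.mpr (hbot ▸ hanti hp)⟩
  obtain ⟨M, hM⟩ := hM
  have disj : ∀ p : ℤ, eig e p ⊓ F (p + 1) = ⊥ := by
    intro p
    rw [eq_bot_iff]
    rintro x ⟨hx, hx1⟩
    have key : ∀ n : ℕ, x ∈ F (p + 1 + n) := by
      intro n
      induction n with
      | zero => simpa using hx1
      | succ k ih =>
        push_cast
        rw [← add_assoc]
        exact step p _ (by omega) x hx ih
    have := key (M - p).toNat
    rwa [hM _ (by omega)] at this
  have SF : ∀ p : ℤ, (⨆ q : ℤ, ⨆ _ : p ≤ q, eig e q) ≤ F p := fun p =>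
    iSup₂_le fun q hq => (eigF q).trans (hanti hq)
  have eigS : ∀ p q : ℤ, p ≤ q → eig e q ≤ ⨆ q : ℤ, ⨆ _ : p ≤ q, eig e q := fun p q h =>
    le_iSup₂_of_le q h le_rfl
  have surj : ∀ p : ℤ, ∀ z ∈ (⨆ q : ℤ, ⨆ _ : p + 1 ≤ q, eig e q),
      ∃ w ∈ (⨆ q : ℤ, ⨆ _ : p + 1 ≤ q, eig e q), ⁅e, w⁆ - (p : ℝ) • w = z := by
    intro p
    set S := (⨆ q : ℤ, ⨆ _ : p + 1 ≤ q, eig e q) with hS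
    have : S ≤ S.map ((LieAlgebra.ad ℝ g e : g →ₗ[ℝ] g) - (p : ℝ) • LinearMap.id) := by
      conv_lhs => rw [hS]
      refine iSup₂_le fun q hq z hz => ?_
      have hne : (q : ℝ) - p ≠ 0 := sub_ne_zero.mpr (by
        have : q ≠ p := by omega
        exact_mod_cast this)
      have hz' : ⁅e, z⁆ = (q : ℝ) • z := hz
      refine ⟨((q : ℝ) - p)⁻¹ • z, S.smul_mem _ (eigS _ q hq hz), ?_⟩
      simp only [LinearMap.sub_apply, LinearMap.smul_apply, LinearMap.id_apply,
        LieAlgebra.ad_apply, lie_smul, hz']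
      rw [smul_comm (p : ℝ), ← smul_sub, ← sub_smul, smul_smul, inv_mul_cancel₀ hne, one_smul]
    intro z hz
    obtain ⟨w, hw, h⟩ := this hz
    exact ⟨w, hw, by simpa using h⟩
  have split : ∀ p : ℤ, F (p + 1) ≤ (⨆ q : ℤ, ⨆ _ : p + 1 ≤ q, eig e q) →
      ∀ x ∈ F p, ∃ w ∈ (⨆ q : ℤ, ⨆ _ : p + 1 ≤ q, eig e q), x - w ∈ eig e p := by
    intro p hp x hx
    obtain ⟨w, hw, h⟩ := surj p _ (hp (hgr p x hx))
    refine ⟨w, hw, ?_⟩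
    change ⁅e, x - w⁆ = (p : ℝ) • (x - w)
    rw [lie_sub, smul_sub, sub_eq_sub_iff_sub_eq_sub]
    exact h.symm
  have FS' : ∀ n : ℕ, ∀ p : ℤ, M ≤ p + n → F p ≤ ⨆ q : ℤ, ⨆ _ : p ≤ q, eig e q := by
    intro n
    induction n with
    | zero => intro p hp; rw [hM p (by simpa using hp)]; exact bot_le
    | succ k ih =>
      intro p hp x hx
      obtain ⟨w, hw, h⟩ := split p (ih (p + 1) (by push_cast at hp; omega)) x hx
      have hle : (⨆ q : ℤ, ⨆ _ : p + 1 ≤ q, eig e q) ≤ ⨆ q : ℤ, ⨆ _ : p ≤ q, eig e q :=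
        iSup₂_le fun q hq => eigS p q (by omega)
      have := Submodule.add_mem _ (eigS p p le_rfl h) (hle hw)
      simpa using this
  have FS : ∀ p : ℤ, F p ≤ ⨆ q : ℤ, ⨆ _ : p ≤ q, eig e q := fun p =>
    FS' (M - p).toNat p (by omega)
  refine ⟨?_, disj, ?_, ?_, fun p => le_antisymm (FS p) (SF p)⟩
  · intro p
    refine le_antisymm ?_ (sup_le (eigF p) (hdec p))
    intro x hx
    obtain ⟨w, hw, h⟩ := split p (FS (p + 1)) x hx
    exact Submodule.mem_sup.mpr ⟨_, h, w, SF _ hw, by simp⟩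
  · rw [eq_top_iff, ← hN N le_rfl]
    exact (FS N).trans (iSup₂_le fun q _ => le_iSup (fun p : ℤ => eig e p) q)
  · intro i j x hx y hy
    have hx' : ⁅e, x⁆ = (i : ℝ) • x := hx
    have hy' : ⁅e, y⁆ = (j : ℝ) • y := hy
    change ⁅e, ⁅x, y⁆⁆ = ((i + j : ℤ) : ℝ) • ⁅x, y⁆
    rw [leibniz_lie, hx', hy', smul_lie, lie_smul, ← add_smul]
    push_cast
    rfl

end
end

section
/- Let S = {f ∈ C^∞(ℝ³) : f(x,y,z) = a·y + g(x,z) for some a ∈ ℝ and smooth g : ℝ² → ℝ}. Then S is a Lie subalgebra of (C^∞(ℝ³), {·,·}) for the Lagrange bracket, and the map Π : S → (vector fields on ℝ² with coordinates (x,z)) given by Π(a·y + g) = (−g_z, g_x + a·z) is a Lie algebra homomorphism whose kernel is the one-dimensional space of constant functions, and whose image is exactly the set of vector fields Y = (P,Q) on ℝ² such that ∂P/∂x + ∂Q/∂z is a constant function, i.e., those Y with L_Y(dx ∧ dz) = λ·dx ∧ dz for a constant λ ∈ ℝ. -/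
noncomputable section

/-- Membership in `S`: `f(x,y,z) = a·y + g(x,z)` with `a ∈ ℝ` and `g` smooth. -/
def memS (f : R3 → ℝ) : Prop :=
  ∃ a : ℝ, ∃ gf : R2 → ℝ, ContDiff ℝ (⊤ : ℕ∞) gf ∧
    ∀ p : R3, f p = a * p.2.1 + gf (p.1, p.2.2)

/-- The projection `Π : S → 𝒟(ℝ²)`, `X_{ay+g} ↦ (−g_z) ∂/∂x + (g_x + a z) ∂/∂z`,
written in the coordinates `(x, z)` on the plane. -/
noncomputable def PiS (f : R3 → ℝ) : R2 → R2 := fun q =>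
  (-(pz f (q.1, 0, q.2)), px f (q.1, 0, q.2) + py f (q.1, 0, q.2) * q.2)

/-- Lie bracket of vector fields on the `(x, z)`-plane. -/
noncomputable def pbr (Y Z : R2 → R2) : R2 → R2 := fun q =>
  fderiv ℝ Z q (Y q) - fderiv ℝ Y q (Z q)

def D1 (g : R2 → ℝ) (q : R2) : ℝ := fderiv ℝ g q (1, 0)

def D2 (g : R2 → ℝ) (q : R2) : ℝ := fderiv ℝ g q (0, 1)

theorem fd_expand (g : R2 → ℝ) (q v : R2) :
    fderiv ℝ g q v = v.1 * D1 g q + v.2 * D2 g q := by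
  have : v = v.1 • ((1, 0) : R2) + v.2 • ((0, 1) : R2) := by ext <;> simp
  conv_lhs => rw [this]
  rw [map_add, map_smul, map_smul]
  rfl

theorem smooth_D1 {g : R2 → ℝ} (hg : ContDiff ℝ (⊤ : ℕ∞) g) : ContDiff ℝ (⊤ : ℕ∞) (D1 g) :=
  (contDiff_infty_iff_fderiv.1 hg).2.clm_apply contDiff_const

theorem smooth_D2 {g : R2 → ℝ} (hg : ContDiff ℝ (⊤ : ℕ∞) g) : ContDiff ℝ (⊤ : ℕ∞) (D2 g) :=
  (contDiff_infty_iff_fderiv.1 hg).2.clm_apply contDiff_const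

theorem sm_diff {g : R2 → ℝ} (hg : ContDiff ℝ (⊤ : ℕ∞) g) : Differentiable ℝ g :=
  (contDiff_infty_iff_fderiv.1 hg).1

theorem fd_apply {g : R2 → ℝ} (hg : ContDiff ℝ (⊤ : ℕ∞) g) (q v w : R2) :
    fderiv ℝ (fun r => fderiv ℝ g r w) q v = fderiv ℝ (fderiv ℝ g) q v w := by
  have h : DifferentiableAt ℝ (fderiv ℝ g) q :=
    (contDiff_infty_iff_fderiv.1 (contDiff_infty_iff_fderiv.1 hg).2).1 q
  rw [fderiv_clm_apply h (differentiableAt_const w)]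
  simp

theorem D_symm {g : R2 → ℝ} (hg : ContDiff ℝ (⊤ : ℕ∞) g) (q : R2) :
    D2 (D1 g) q = D1 (D2 g) q := by
  have h : IsSymmSndFDerivAt ℝ g q := hg.contDiffAt.isSymmSndFDerivAt (by
    simp only [minSmoothness_of_isRCLikeNormedField]
    exact WithTop.coe_le_coe.2 (le_top : (2 : ℕ∞) ≤ ⊤))
  have e := h (0, 1) (1, 0)
  rw [← fd_apply hg, ← fd_apply hg] at e
  exact e

theorem fd_form (a : ℝ) {g : R2 → ℝ} (hg : Differentiable ℝ g) (p v : R3) :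
    fderiv ℝ (fun p : R3 => a * p.2.1 + g (p.1, p.2.2)) p v
      = a * v.2.1 + fderiv ℝ g (p.1, p.2.2) (v.1, v.2.2) := by
  have h1 : HasFDerivAt (fun p : R3 => p.2.1)
      ((ContinuousLinearMap.fst ℝ ℝ ℝ).comp (ContinuousLinearMap.snd ℝ ℝ (ℝ × ℝ))) p :=
    ((ContinuousLinearMap.fst ℝ ℝ ℝ).comp (ContinuousLinearMap.snd ℝ ℝ (ℝ × ℝ))).hasFDerivAt
  have h2 : HasFDerivAt (fun p : R3 => ((p.1, p.2.2) : R2))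
      ((ContinuousLinearMap.fst ℝ ℝ (ℝ × ℝ)).prod
        ((ContinuousLinearMap.snd ℝ ℝ ℝ).comp (ContinuousLinearMap.snd ℝ ℝ (ℝ × ℝ)))) p :=
    ((ContinuousLinearMap.fst ℝ ℝ (ℝ × ℝ)).prod
        ((ContinuousLinearMap.snd ℝ ℝ ℝ).comp (ContinuousLinearMap.snd ℝ ℝ (ℝ × ℝ)))).hasFDerivAt
  have h3 := (h1.const_mul a).add ((hg (p.1, p.2.2)).hasFDerivAt.comp p h2)
  have e : fderiv ℝ (fun p : R3 => a * p.2.1 + g (p.1, p.2.2)) p = _ := h3.fderiv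
  rw [e]
  simp

def F (a : ℝ) (g : R2 → ℝ) : R3 → ℝ := fun p => a * p.2.1 + g (p.1, p.2.2)

theorem px_F (a : ℝ) {g : R2 → ℝ} (hg : Differentiable ℝ g) (p : R3) :
    px (F a g) p = D1 g (p.1, p.2.2) := by
  unfold px F; rw [fd_form a hg]; simp [D1]

theorem py_F (a : ℝ) {g : R2 → ℝ} (hg : Differentiable ℝ g) (p : R3) :
    py (F a g) p = a := by
  unfold py F; rw [fd_form a hg]
  have : ((0, 0) : R2) = 0 := rfl
  simp [this]

theorem pz_F (a : ℝ) {g : R2 → ℝ} (hg : Differentiable ℝ g) (p : R3) :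
    pz (F a g) p = D2 g (p.1, p.2.2) := by
  unfold pz F; rw [fd_form a hg]; simp [D2]

theorem PiS_F (a : ℝ) {g : R2 → ℝ} (hg : Differentiable ℝ g) :
    PiS (F a g) = fun q => (-(D2 g q), D1 g q + a * q.2) := by
  funext q
  simp only [PiS, px_F a hg, py_F a hg, pz_F a hg]

def M (a b : ℝ) (g k : R2 → ℝ) : R2 → ℝ := fun q =>
  D1 g q * D2 k q - D2 g q * D1 k q + q.2 * (a * D2 k q - D2 g q * b) + g q * b - k q * a

theorem lagr_F (a b : ℝ) {g k : R2 → ℝ} (hg : Differentiable ℝ g) (hk : Differentiable ℝ k) :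
    lagr (F a g) (F b k) = F 0 (M a b g k) := by
  funext p
  simp only [lagr, px_F _ hg, py_F _ hg, pz_F _ hg, px_F _ hk, py_F _ hk, pz_F _ hk]
  simp only [F, M]
  ring

theorem smooth_M (a b : ℝ) {g k : R2 → ℝ} (hg : ContDiff ℝ (⊤ : ℕ∞) g)
    (hk : ContDiff ℝ (⊤ : ℕ∞) k) : ContDiff ℝ (⊤ : ℕ∞) (M a b g k) := by
  have h1 := smooth_D1 hg
  have h2 := smooth_D2 hg
  have h3 := smooth_D1 hk
  have h4 := smooth_D2 hk
  unfold M
  fun_prop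

theorem fd_M (a b : ℝ) {g k : R2 → ℝ} (hg : ContDiff ℝ (⊤ : ℕ∞) g)
    (hk : ContDiff ℝ (⊤ : ℕ∞) k) (q v : R2) :
    fderiv ℝ (M a b g k) q v =
      fderiv ℝ (D1 g) q v * D2 k q + D1 g q * fderiv ℝ (D2 k) q v
      - (fderiv ℝ (D2 g) q v * D1 k q + D2 g q * fderiv ℝ (D1 k) q v)
      + (v.2 * (a * D2 k q - D2 g q * b)
        + q.2 * (a * fderiv ℝ (D2 k) q v - fderiv ℝ (D2 g) q v * b))
      + fderiv ℝ g q v * b - fderiv ℝ k q v * a := by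
  have h1 := (sm_diff (smooth_D1 hg) q).hasFDerivAt
  have h2 := (sm_diff (smooth_D2 hg) q).hasFDerivAt
  have h3 := (sm_diff (smooth_D1 hk) q).hasFDerivAt
  have h4 := (sm_diff (smooth_D2 hk) q).hasFDerivAt
  have h5 := (sm_diff hg q).hasFDerivAt
  have h6 := (sm_diff hk q).hasFDerivAt
  have h7 : HasFDerivAt (fun q : R2 => q.2) (ContinuousLinearMap.snd ℝ ℝ ℝ) q :=
    (ContinuousLinearMap.snd ℝ ℝ ℝ).hasFDerivAt
  have h := (((((h1.mul h4).sub (h2.mul h3)).add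
    (h7.mul ((h4.const_mul a).sub (h2.mul_const b)))).add (h5.mul_const b)).sub
    (h6.mul_const a))
  have e : fderiv ℝ (M a b g k) q = _ := h.fderiv
  rw [e]
  simp
  ring

theorem fd_Pi (a : ℝ) {g : R2 → ℝ} (hg : ContDiff ℝ (⊤ : ℕ∞) g) (q v : R2) :
    fderiv ℝ (fun q : R2 => ((-(D2 g q), D1 g q + a * q.2) : R2)) q v
      = (-(fderiv ℝ (D2 g) q v), fderiv ℝ (D1 g) q v + a * v.2) := by
  have h1 := (sm_diff (smooth_D1 hg) q).hasFDerivAt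
  have h2 := (sm_diff (smooth_D2 hg) q).hasFDerivAt
  have h7 : HasFDerivAt (fun q : R2 => q.2) (ContinuousLinearMap.snd ℝ ℝ ℝ) q :=
    (ContinuousLinearMap.snd ℝ ℝ ℝ).hasFDerivAt
  have h := h2.neg.prodMk (h1.add (h7.const_mul a))
  have e : fderiv ℝ (fun q : R2 => ((-(D2 g q), D1 g q + a * q.2) : R2)) q = _ := h.fderiv
  rw [e]
  simp

theorem memS_iff {f : R3 → ℝ} :
    memS f ↔ ∃ a g, ContDiff ℝ (⊤ : ℕ∞) g ∧ f = F a g := by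
  constructor
  · rintro ⟨a, g, hg, h⟩
    exact ⟨a, g, hg, funext h⟩
  · rintro ⟨a, g, hg, h⟩
    exact ⟨a, g, hg, fun p => congrFun h p⟩

theorem div_Pi (a : ℝ) {g : R2 → ℝ} (hg : ContDiff ℝ (⊤ : ℕ∞) g) (q : R2) :
    fderiv ℝ (fun r : R2 => -(D2 g r)) q (1, 0)
      + fderiv ℝ (fun r : R2 => D1 g r + a * r.2) q (0, 1) = a := by
  have h1 := (sm_diff (smooth_D1 hg) q).hasFDerivAt
  have h2 := (sm_diff (smooth_D2 hg) q).hasFDerivAt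
  have h7 : HasFDerivAt (fun q : R2 => q.2) (ContinuousLinearMap.snd ℝ ℝ ℝ) q :=
    (ContinuousLinearMap.snd ℝ ℝ ℝ).hasFDerivAt
  have e1 : fderiv ℝ (fun r : R2 => -(D2 g r)) q = _ := h2.neg.fderiv
  have e2 : fderiv ℝ (fun r : R2 => D1 g r + a * r.2) q = _ := (h1.add (h7.const_mul a)).fderiv
  rw [e1, e2]
  have s : fderiv ℝ (D1 g) q (0, 1) = fderiv ℝ (D2 g) q (1, 0) := D_symm hg q
  simp [s]

theorem poincare {A B : R2 → ℝ} (hA : ContDiff ℝ (⊤ : ℕ∞) A) (hB : ContDiff ℝ (⊤ : ℕ∞) B)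
    (hAB : ∀ q, D2 A q = D1 B q) :
    ∃ g : R2 → ℝ, ContDiff ℝ (⊤ : ℕ∞) g ∧ (∀ q, D1 g q = A q) ∧ ∀ q, D2 g q = B q := by
  let ω : R2 → R2 →L[ℝ] ℝ := fun q =>
    A q • ContinuousLinearMap.fst ℝ ℝ ℝ + B q • ContinuousLinearMap.snd ℝ ℝ ℝ
  have hω : ContDiff ℝ (⊤ : ℕ∞) ω :=
    (hA.smul contDiff_const).add (hB.smul contDiff_const)
  have hd : ∀ q x y, fderiv ℝ ω q x y = fderiv ℝ A q x * y.1 + fderiv ℝ B q x * y.2 := by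
    intro q x y
    have h := ((sm_diff hA q).hasFDerivAt.smul_const (ContinuousLinearMap.fst ℝ ℝ ℝ)).add
      ((sm_diff hB q).hasFDerivAt.smul_const (ContinuousLinearMap.snd ℝ ℝ ℝ))
    have e : fderiv ℝ ω q = _ := h.fderiv
    rw [e]
    simp
  obtain ⟨g, hg⟩ := convex_univ.exists_forall_hasFDerivAt_of_fderiv_symmetric (ω := ω)
    isOpen_univ (contDiff_infty_iff_fderiv.1 hω).1.differentiableOn (by
      intro q _ x y
      rw [hd, hd, fd_expand A, fd_expand B, fd_expand A, fd_expand B, hAB]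
      ring)
  have hf : fderiv ℝ g = ω := funext fun q => (hg q trivial).fderiv
  refine ⟨g, contDiff_infty_iff_fderiv.2
    ⟨fun q => (hg q trivial).differentiableAt, hf ▸ hω⟩, fun q => ?_, fun q => ?_⟩
  · simp [D1, hf, ω]
  · simp [D2, hf, ω]

/-- The set `S = {a·y + g(x,z)}` is a Lie subalgebra of
`(C^∞(ℝ³), {·,·})`, and `Π(a·y + g) = (−g_z, g_x + a·z)` is a Lie algebra homomorphism
to vector fields on the `(x,z)`-plane whose kernel is the one-dimensional space of
constants and whose image consists exactly of the vector fields `Y = (P,Q)` with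
`∂P/∂x + ∂Q/∂z` constant, i.e. `L_Y (dx ∧ dz) = λ · dx ∧ dz` with `λ ∈ ℝ` constant. -/
theorem stmt17 :
    (∀ f g : R3 → ℝ, memS f → memS g → memS (lagr f g)) ∧
    (∀ f g : R3 → ℝ, memS f → memS g →
      ∀ q : R2, PiS (lagr f g) q = pbr (PiS f) (PiS g) q) ∧
    (∀ f : R3 → ℝ, memS f →
      ((∀ q : R2, PiS f q = 0) ↔ ∃ c : ℝ, ∀ p : R3, f p = c)) ∧
    (∀ Y : R2 → R2, ContDiff ℝ (⊤ : ℕ∞) Y →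
      ((∃ f : R3 → ℝ, memS f ∧ ∀ q : R2, PiS f q = Y q) ↔
        ∃ lam : ℝ, ∀ q : R2,
          fderiv ℝ (fun r => (Y r).1) q (1, 0)
            + fderiv ℝ (fun r => (Y r).2) q (0, 1) = lam)) := by
  refine ⟨?_, ?_, ?_, ?_⟩
  · intro f h hf hh
    obtain ⟨a, g, hg, rfl⟩ := memS_iff.1 hf
    obtain ⟨b, k, hk, rfl⟩ := memS_iff.1 hh
    exact memS_iff.2 ⟨0, M a b g k, smooth_M a b hg hk, lagr_F a b (sm_diff hg) (sm_diff hk)⟩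
  · intro f h hf hh q
    obtain ⟨a, g, hg, rfl⟩ := memS_iff.1 hf
    obtain ⟨b, k, hk, rfl⟩ := memS_iff.1 hh
    rw [lagr_F a b (sm_diff hg) (sm_diff hk), PiS_F 0 (sm_diff (smooth_M a b hg hk)),
      PiS_F a (sm_diff hg), PiS_F b (sm_diff hk)]
    unfold pbr
    rw [fd_Pi b hk, fd_Pi a hg]
    have s1 := D_symm hg q
    have s2 := D_symm hk q
    have m1 := fd_M a b hg hk q (1, 0)
    have m2 := fd_M a b hg hk q (0, 1)
    change D1 (M a b g k) q = _ at m1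
    change D2 (M a b g k) q = _ at m2
    beta_reduce
    rw [m1, m2]
    simp only [fd_expand, s1, s2]
    ext
    · simp only [Prod.fst_sub]
      ring
    · simp only [Prod.snd_sub]
      ring
  · intro f hf
    obtain ⟨a, g, hg, rfl⟩ := memS_iff.1 hf
    constructor
    · intro h
      rw [PiS_F a (sm_diff hg)] at h
      have h2 : ∀ q, D2 g q = 0 := fun q => by
        simpa using congrArg Prod.fst (h q)
      have h1 : ∀ q : R2, D1 g q + a * q.2 = 0 := fun q => congrArg Prod.snd (h q)
      have ha : a = 0 := by
        have e := div_Pi a hg 0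
        simp only [h2, h1] at e
        simpa using e.symm
      subst ha
      refine ⟨g 0, fun p => ?_⟩
      have hc := is_const_of_fderiv_eq_zero (sm_diff hg) (fun q => by
        ext
        · simpa [D1] using h1 q
        · simpa [D2] using h2 q) (p.1, p.2.2) 0
      simp [F, hc]
    · rintro ⟨c, hc⟩ q
      have : F a g = fun _ => c := funext hc
      rw [this]
      simp [PiS, px, py, pz]
  · intro Y hY
    constructor
    · rintro ⟨f, hf, h⟩
      obtain ⟨a, g, hg, rfl⟩ := memS_iff.1 hf
      have hY' : Y = fun q => (-(D2 g q), D1 g q + a * q.2) := by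
        rw [← PiS_F a (sm_diff hg)]
        exact (funext h).symm
      subst hY'
      exact ⟨a, fun q => div_Pi a hg q⟩
    · rintro ⟨a, h⟩
      have hP : ContDiff ℝ (⊤ : ℕ∞) (fun r => (Y r).1) := hY.fst
      have hQ : ContDiff ℝ (⊤ : ℕ∞) (fun r => (Y r).2) := hY.snd
      obtain ⟨g, hg, h1, h2⟩ := poincare (A := fun r => (Y r).2 - a * r.2)
        (B := fun r => -(Y r).1) (by fun_prop) (by fun_prop) (by
          intro q
          have h7 : HasFDerivAt (fun q : R2 => q.2) (ContinuousLinearMap.snd ℝ ℝ ℝ) q :=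
            (ContinuousLinearMap.snd ℝ ℝ ℝ).hasFDerivAt
          have e1 : fderiv ℝ (fun r : R2 => (Y r).2 - a * r.2) q = _ :=
            ((sm_diff hQ q).hasFDerivAt.sub (h7.const_mul a)).fderiv
          have e2 : fderiv ℝ (fun r : R2 => -(Y r).1) q = _ :=
            ((sm_diff hP q).hasFDerivAt.neg).fderiv
          have := h q
          simp only [D1, D2, e1, e2]
          simp
          linarith)
      refine ⟨F a g, memS_iff.2 ⟨a, g, hg, rfl⟩, fun q => ?_⟩
      rw [PiS_F a (sm_diff hg)]
      simp [h1, h2]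
end
end

section
/- The four smooth functions 1, z, √(1+z²)·sinh x, √(1+z²)·cosh x on ℝ³ span a four-dimensional subspace of C^∞(ℝ³) that is closed under the Lagrange bracket, and the resulting four-dimensional real Lie algebra is isomorphic to gl(2,ℝ). Explicitly, writing f₁ = 1, f₂ = z, f₃ = √(1+z²) sinh x, f₄ = √(1+z²) cosh x, one has {f₁, f_i} = 0 for all i, {f₂, f₃} = −f₄, {f₂, f₄} = −f₃, and {f₃, f₄} = f₂. -/
noncomputable section

/-- `f₁ = 1`. -/
noncomputable def c1 : R3 → ℝ := fun _ => 1

/-- `f₂ = z`. -/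
noncomputable def c2 : R3 → ℝ := fun p => p.2.2

/-- `f₃ = √(1+z²)·sinh x`. -/
noncomputable def c3 : R3 → ℝ := fun p => Real.sqrt (1 + p.2.2 ^ 2) * Real.sinh p.1

/-- `f₄ = √(1+z²)·cosh x`. -/
noncomputable def c4 : R3 → ℝ := fun p => Real.sqrt (1 + p.2.2 ^ 2) * Real.cosh p.1

/-- The span of `f₁, f₂, f₃, f₄` inside the functions on `ℝ³`. -/
noncomputable def Vspan : Submodule ℝ (R3 → ℝ) := Submodule.span ℝ {c1, c2, c3, c4}

/-- General element of the span. -/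
def comb (a b c d : ℝ) : R3 → ℝ := fun p => a * c1 p + b * c2 p + c * c3 p + d * c4 p

theorem comb_fderiv (a b c d : ℝ) (p v : R3) : fderiv ℝ (comb a b c d) p v =
    b * v.2.2 + c * (p.2.2 / √(1 + p.2.2 ^ 2) * v.2.2 * Real.sinh p.1
      + √(1 + p.2.2 ^ 2) * Real.cosh p.1 * v.1)
    + d * (p.2.2 / √(1 + p.2.2 ^ 2) * v.2.2 * Real.cosh p.1
      + √(1 + p.2.2 ^ 2) * Real.sinh p.1 * v.1) := by
  have hz : HasFDerivAt (fun p : R3 => p.2.2)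
      ((ContinuousLinearMap.snd ℝ ℝ ℝ).comp (ContinuousLinearMap.snd ℝ ℝ (ℝ × ℝ))) p :=
    ((ContinuousLinearMap.snd ℝ ℝ ℝ).comp (ContinuousLinearMap.snd ℝ ℝ (ℝ × ℝ))).hasFDerivAt
  have hx : HasFDerivAt (fun p : R3 => p.1) (ContinuousLinearMap.fst ℝ ℝ (ℝ × ℝ)) p :=
    (ContinuousLinearMap.fst ℝ ℝ (ℝ × ℝ)).hasFDerivAt
  have hpos : (0 : ℝ) < 1 + p.2.2 ^ 2 := by positivity
  have hs := ((hz.pow 2).const_add 1).sqrt hpos.ne'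
  have h3 := hs.mul hx.sinh
  have h4 := hs.mul hx.cosh
  have h := ((hz.const_mul b).const_add (a * 1)).add (h3.const_mul c) |>.add (h4.const_mul d)
  have h' : HasFDerivAt (comb a b c d) _ p := h
  rw [h'.fderiv]
  have : √(1 + p.2.2 ^ 2) ≠ 0 := (Real.sqrt_pos.2 hpos).ne'
  simp
  field_simp
  ring

theorem lagr_comb (a b c d a' b' c' d' : ℝ) :
    lagr (comb a b c d) (comb a' b' c' d') =
      comb 0 (c * d' - d * c') (-(b * d' - d * b')) (-(b * c' - c * b')) := by
  funext p
  have hpos : (0 : ℝ) < 1 + p.2.2 ^ 2 := by positivity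
  have hne : √(1 + p.2.2 ^ 2) ≠ 0 := (Real.sqrt_pos.2 hpos).ne'
  have hc := Real.cosh_sq p.1
  simp only [lagr, px, py, pz, comb_fderiv]
  simp only [comb, c1, c2, c3, c4]
  field_simp
  generalize √(1 + p.2.2 ^ 2) = s at *
  ring_nf
  rw [hc]
  ring

theorem c1_eq : c1 = comb 1 0 0 0 := by funext p; simp [comb]
theorem c2_eq : c2 = comb 0 1 0 0 := by funext p; simp [comb]
theorem c3_eq : c3 = comb 0 0 1 0 := by funext p; simp [comb]
theorem c4_eq : c4 = comb 0 0 0 1 := by funext p; simp [comb]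

/-- The parametrization of the span by matrices. -/
def psi : Matrix (Fin 2) (Fin 2) ℝ →ₗ[ℝ] (R3 → ℝ) where
  toFun M := comb ((M 0 0 + M 1 1) / 2) (M 0 0 - M 1 1) (M 0 1 + M 1 0) (M 1 0 - M 0 1)
  map_add' M N := by funext p; simp [comb]; ring
  map_smul' r M := by funext p; simp [comb]; ring

theorem psi_apply (M : Matrix (Fin 2) (Fin 2) ℝ) : psi M =
  comb ((M 0 0 + M 1 1) / 2) (M 0 0 - M 1 1) (M 0 1 + M 1 0) (M 1 0 - M 0 1) := rfl

theorem psi_of (a b c d : ℝ) :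
    psi !![a + b / 2, (c - d) / 2; (c + d) / 2, a - b / 2] = comb a b c d := by
  rw [psi_apply]
  simp only [Matrix.of_apply, Matrix.cons_val', Matrix.cons_val_zero, Matrix.cons_val_one,
    Matrix.cons_val_fin_one]
  congr 1 <;> ring

theorem psi_lagr (M N : Matrix (Fin 2) (Fin 2) ℝ) :
    lagr (psi M) (psi N) = psi (M * N - N * M) := by
  simp only [psi_apply, lagr_comb, Matrix.sub_apply, Matrix.mul_apply, Fin.sum_univ_two]
  congr 1 <;> ring

theorem comb_zero {a b c d : ℝ} (h : comb a b c d = 0) : a = 0 ∧ b = 0 ∧ c = 0 ∧ d = 0 := by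
  have e0 := congrFun h (0, 0, 0)
  have e1 := congrFun h (0, 0, 1)
  have e2 := congrFun h (0, 0, -1)
  have e3 := congrFun h (1, 0, 0)
  simp [comb, c1, c2, c3, c4] at e0 e1 e2 e3
  norm_num at e1 e2
  have hs : (1 : ℝ) < √2 := by
    rw [Real.lt_sqrt] <;> norm_num
  have hd : d = 0 := by
    have : d * (√2 - 1) = 0 := by linarith
    rcases mul_eq_zero.1 this with h | h
    · exact h
    · linarith
  subst hd
  have ha : a = 0 := by linarith
  subst ha
  have hb : b = 0 := by linarith
  subst hb
  have h1 : Real.sinh 1 ≠ 0 := (Real.sinh_pos_iff.2 one_pos).ne'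
  simp [h1] at e3
  simp [e3]

theorem psi_inj : Function.Injective psi := by
  rw [injective_iff_map_eq_zero]
  intro M h
  rw [psi_apply] at h
  obtain ⟨h1, h2, h3, h4⟩ := comb_zero h
  ext i j
  fin_cases i <;> fin_cases j <;> simp <;> linarith

theorem psi_range : LinearMap.range psi = Vspan := by
  apply le_antisymm
  · rintro _ ⟨M, rfl⟩
    have hm : ∀ x ∈ ({c1, c2, c3, c4} : Set (R3 → ℝ)), x ∈ Vspan :=
      fun x hx => Submodule.subset_span hx
    rw [psi_apply]
    exact Vspan.add_mem (Vspan.add_mem (Vspan.add_mem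
      (Vspan.smul_mem _ (hm c1 (by simp))) (Vspan.smul_mem _ (hm c2 (by simp))))
      (Vspan.smul_mem _ (hm c3 (by simp)))) (Vspan.smul_mem _ (hm c4 (by simp)))
  · refine Submodule.span_le.2 ?_
    rintro x (rfl | rfl | rfl | rfl)
    · rw [c1_eq, ← psi_of]; exact ⟨_, rfl⟩
    · rw [c2_eq, ← psi_of]; exact ⟨_, rfl⟩
    · rw [c3_eq, ← psi_of]; exact ⟨_, rfl⟩
    · rw [c4_eq, ← psi_of]; exact ⟨_, rfl⟩

/-- The span is linearly equivalent to the matrices. -/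
def psiEquiv : Matrix (Fin 2) (Fin 2) ℝ ≃ₗ[ℝ] ↥Vspan :=
  (LinearEquiv.ofInjective psi psi_inj).trans (LinearEquiv.ofEq _ _ psi_range)

theorem psiEquiv_coe (M : Matrix (Fin 2) (Fin 2) ℝ) : (psiEquiv M : R3 → ℝ) = psi M := rfl

/-- The functions `1, z, √(1+z²) sinh x, √(1+z²) cosh x` span a
four-dimensional subspace of `C^∞(ℝ³)` closed under the Lagrange bracket, the resulting
Lie algebra is isomorphic to `gl(2,ℝ)`, and explicitly `{f₁, f_i} = 0`,
`{f₂,f₃} = −f₄`, `{f₂,f₄} = −f₃`, `{f₃,f₄} = f₂`. -/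
theorem stmt18 :
    Module.finrank ℝ ↥Vspan = 4 ∧
    (∀ u ∈ Vspan, ∀ v ∈ Vspan, lagr u v ∈ Vspan) ∧
    (∀ p : R3,
      lagr c1 c1 p = 0 ∧ lagr c1 c2 p = 0 ∧ lagr c1 c3 p = 0 ∧ lagr c1 c4 p = 0 ∧
      lagr c2 c3 p = -c4 p ∧ lagr c2 c4 p = -c3 p ∧ lagr c3 c4 p = c2 p) ∧
    (∃ φ : ↥Vspan ≃ₗ[ℝ] Matrix (Fin 2) (Fin 2) ℝ,
      ∀ u v w : ↥Vspan, (w : R3 → ℝ) = lagr (u : R3 → ℝ) (v : R3 → ℝ) →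
        φ w = φ u * φ v - φ v * φ u) := by
  refine ⟨?_, ?_, ?_, psiEquiv.symm, ?_⟩
  · rw [← psiEquiv.finrank_eq]
    simp [Module.finrank_matrix]
  · intro u hu v hv
    rw [← psi_range] at hu hv ⊢
    obtain ⟨M, rfl⟩ := hu
    obtain ⟨N, rfl⟩ := hv
    exact ⟨_, (psi_lagr M N).symm⟩
  · intro p
    simp only [c1_eq, c2_eq, c3_eq, c4_eq, lagr_comb]
    simp [comb]
  · intro u v w h
    obtain ⟨M, rfl⟩ := psiEquiv.surjective u
    obtain ⟨N, rfl⟩ := psiEquiv.surjective v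
    have : w = psiEquiv (M * N - N * M) := by
      apply Subtype.ext
      rw [h, psiEquiv_coe, psiEquiv_coe, psiEquiv_coe, psi_lagr]
    simp [this]
end
end
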